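/- Let (X, μ) be a probability space with a measure-preserving ℤ²-action, and let f ∈ L^∞(X) be an integer-valued function with Ann(f) ≠ {0}. Then there exists a finite set Δ ⊆ ℤ² ∖ {0} such that: (1) no two elements of Δ are proportional to each other; (2) the function f₀ = f − Σ_{g∈Δ} f^g is periodic; and (3) for every l ≥ 1 and every g ∈ Δ, the function f^{lg} − f^g is periodic. -/

import Mathlib

open MeasureTheory

/-- The action of a Laurent polynomial `p = Σ c_g u^g ∈ ℤ[u₁^±, u₂^±]` on a function
`f : X → ℝ`, relative to a `ℤ²`-action `T` on `X` : `(p · f)(x) = Σ c_g f(g⁻¹ · x)`. -/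
noncomputable def polyAct {X : Type*} (T : ℤ × ℤ → X → X)
    (p : AddMonoidAlgebra ℤ (ℤ × ℤ)) (f : X → ℝ) : X → ℝ :=
  fun x => Finsupp.sum p.coeff fun g c => (c : ℝ) * f (T (-g) x)

/-- The σ-algebra of measurable sets invariant under a map `S : X → X`. -/
def invSigma {X : Type*} [MeasurableSpace X] (S : X → X) : MeasurableSpace X where
  MeasurableSet' A := MeasurableSet A ∧ S ⁻¹' A = A
  measurableSet_empty := ⟨MeasurableSet.empty, by simp⟩
  measurableSet_compl A hA := ⟨hA.1.compl, by rw [Set.preimage_compl, hA.2]⟩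
  measurableSet_iUnion A hA := ⟨MeasurableSet.iUnion fun i => (hA i).1, by
    rw [Set.preimage_iUnion]; exact Set.iUnion_congr fun i => (hA i).2⟩

/-- `f^g` : the projection of `f` onto the space of `T g`-invariant functions,
realized as the conditional expectation with respect to the invariant σ-algebra. -/
noncomputable def invProj {X : Type*} [MeasurableSpace X] (μ : Measure X)
    (T : ℤ × ℤ → X → X) (f : X → ℝ) (g : ℤ × ℤ) : X → ℝ :=
  μ[f | invSigma (T g)]

/-- A function `f` is periodic if `f(g⁻¹ · x) = f(x)` μ-a.e. for every `g` in some
finite index subgroup `Λ ⊆ ℤ²`. -/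
def PeriodicFun {X : Type*} [MeasurableSpace X] (μ : Measure X)
    (T : ℤ × ℤ → X → X) (f : X → ℝ) : Prop :=
  ∃ Λ : AddSubgroup (ℤ × ℤ), Λ.FiniteIndex ∧
    ∀ g ∈ Λ, (fun x => f (T (-g) x)) =ᵐ[μ] f

/-- Two elements `g, h ∈ ℤ²` are proportional if `a • g = b • h` for some nonzero
integers `a, b`. -/
def Proportional (g h : ℤ × ℤ) : Prop :=
  ∃ a b : ℤ, a ≠ 0 ∧ b ≠ 0 ∧ a • g = b • h

/-!
Write `p = Σ c_g u^g` for an annihilator of `f`, translated so that `c_0 ≠ 0`, and let `|f| ≤ B`.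
For a prime `q` we have `p ^ q ≡ p(u^q)` modulo `q` and `p ^ q · f = 0`, so the values of
`p(u^q) · f` are divisible by `q`; being at most `B Σ |c_g|` in absolute value, they vanish once
`q` exceeds this bound.
Iterating, `p(u^n) · f = 0` whenever all prime factors of `n` are large, for instance when
`n = 1 + k N` with `N = Q!` and `Q ≥ B Σ |c_g|`. Averaging these identities over `k`, the mean
ergodic theorem gives `Σ c_g u^g f^(N g) = 0`, whose term at `g = 0` is `c_0 f`. Hence
`f = Σ_{g ≠ 0} φ_g` with `φ_g` invariant under `N g`.

Choose nonzero multiples `w_g` of the `N g` which coincide as soon as they are proportional. The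
projection `φ_g^h` is `φ_g` if `h` is a multiple of `w_g`; if `h` is not proportional to `w_g`, it
is invariant under both and hence periodic. So `f^(l w)` differs from `Σ_{w_g = w} φ_g` by a
periodic function, for every `l ≥ 1`, and `Δ` can be taken to be the set of the `w_g`.
-/

section Dilation

variable {G : Type*} [AddCommMonoid G]

/-- The substitution `u^g ↦ u^(n g)` on the group ring. -/
noncomputable def dilate (n : ℕ) : AddMonoidAlgebra ℤ G →+* AddMonoidAlgebra ℤ G :=
  AddMonoidAlgebra.mapDomainRingHom ℤ (nsmulAddMonoidHom n)

theorem dilate_single (n : ℕ) (g : G) (c : ℤ) :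
    dilate n (AddMonoidAlgebra.single g c) = AddMonoidAlgebra.single (n • g) c := by
  simp [dilate]

theorem dilate_one (p : AddMonoidAlgebra ℤ G) : dilate 1 p = p := by
  induction p using AddMonoidAlgebra.induction_linear with
  | zero => exact map_zero _
  | add p q hp hq => rw [map_add, hp, hq]
  | single g c => rw [dilate_single, one_smul]

theorem dilate_dilate (m n : ℕ) (p : AddMonoidAlgebra ℤ G) :
    dilate m (dilate n p) = dilate (m * n) p := by
  induction p using AddMonoidAlgebra.induction_linear with
  | zero => simp only [map_zero]
  | add p q hp hq => simp only [map_add, hp, hq]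
  | single g c => simp only [dilate_single, mul_smul]

theorem exists_pow_prime_eq_dilate_add {q : ℕ} (hq : q.Prime) (p : AddMonoidAlgebra ℤ G) :
    ∃ r, p ^ q = dilate q p + (q : ℤ) • r := by
  induction p using AddMonoidAlgebra.induction_linear with
  | zero => exact ⟨0, by simp [hq.ne_zero]⟩
  | add a b ha hb =>
    obtain ⟨r, hr⟩ := ha
    obtain ⟨s, hs⟩ := hb
    obtain ⟨t, ht⟩ := exists_add_pow_prime_eq hq a b
    refine ⟨r + s + a * b * t, ?_⟩
    rw [ht, hr, hs, map_add]
    simp only [zsmul_eq_mul, Int.cast_natCast]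
    ring
  | single g c =>
    have := Fact.mk hq
    obtain ⟨d, hd⟩ : (q : ℤ) ∣ c ^ q - c := by
      rw [← ZMod.intCast_zmod_eq_zero_iff_dvd]
      simp
    refine ⟨AddMonoidAlgebra.single (q • g) d, ?_⟩
    rw [dilate_single, AddMonoidAlgebra.single_pow, AddMonoidAlgebra.smul_single, smul_eq_mul,
      ← AddMonoidAlgebra.single_add, ← hd, add_sub_cancel]

theorem map_dilate_mul_single (Λ : AddMonoidAlgebra ℤ G →+ ℤ) (n : ℕ) (p : AddMonoidAlgebra ℤ G)
    (h : G) :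
    Λ (dilate n p * AddMonoidAlgebra.single h 1) =
      p.coeff.sum fun g c => c * Λ (AddMonoidAlgebra.single (n • g + h) 1) := by
  induction p using AddMonoidAlgebra.induction_linear with
  | zero => simp
  | add p q hp hq =>
    rw [map_add, add_mul, map_add, hp, hq, AddMonoidAlgebra.coeff_add,
      Finsupp.sum_add_index' (fun _ => zero_mul _) (fun _ _ _ => add_mul _ _ _)]
  | single g c =>
    have hc : AddMonoidAlgebra.single (n • g + h) c =
        c • AddMonoidAlgebra.single (n • g + h) (1 : ℤ) := by
      rw [AddMonoidAlgebra.smul_single, smul_eq_mul, mul_one]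
    rw [dilate_single, AddMonoidAlgebra.single_mul_single, mul_one, hc, map_zsmul, smul_eq_mul,
      AddMonoidAlgebra.coeff_single, Finsupp.sum_single_index (zero_mul _)]

theorem abs_map_dilate_mul_single_le (Λ : AddMonoidAlgebra ℤ G →+ ℤ) {B : ℤ}
    (hB : ∀ g, |Λ (AddMonoidAlgebra.single g 1)| ≤ B) (n : ℕ) (p : AddMonoidAlgebra ℤ G) (h : G) :
    |Λ (dilate n p * AddMonoidAlgebra.single h 1)| ≤ (p.coeff.sum fun _ c => |c|) * B := by
  rw [map_dilate_mul_single, Finsupp.sum, Finsupp.sum, Finset.sum_mul]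
  refine (Finset.abs_sum_le_sum_abs _ _).trans (Finset.sum_le_sum fun g _ => ?_)
  rw [abs_mul]
  exact mul_le_mul_of_nonneg_left (hB _) (abs_nonneg _)

theorem map_mul_eq_zero_of_single (Λ : AddMonoidAlgebra ℤ G →+ ℤ) {p : AddMonoidAlgebra ℤ G}
    (h : ∀ g, Λ (p * AddMonoidAlgebra.single g 1) = 0) (r : AddMonoidAlgebra ℤ G) :
    Λ (p * r) = 0 := by
  induction r using AddMonoidAlgebra.induction_linear with
  | zero => rw [mul_zero, map_zero]
  | add r s hr hs => rw [mul_add, map_add, hr, hs, add_zero]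
  | single g c =>
    have hc : AddMonoidAlgebra.single g c = c • AddMonoidAlgebra.single g (1 : ℤ) := by
      rw [AddMonoidAlgebra.smul_single, smul_eq_mul, mul_one]
    rw [hc, mul_smul_comm, map_zsmul, h, smul_zero]

theorem map_dilate_mul_eq_zero (Λ : AddMonoidAlgebra ℤ G →+ ℤ) {B : ℤ}
    (hB : ∀ g, |Λ (AddMonoidAlgebra.single g 1)| ≤ B) {p : AddMonoidAlgebra ℤ G}
    (hp : ∀ r, Λ (p * r) = 0) {n : ℕ} (hn₀ : n ≠ 0)
    (hn : ∀ q : ℕ, q.Prime → q ∣ n → (p.coeff.sum fun _ c => |c|) * B < q)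
    (r : AddMonoidAlgebra ℤ G) : Λ (dilate n p * r) = 0 := by
  induction n using induction_on_primes generalizing r with
  | zero => exact absurd rfl hn₀
  | one => rw [dilate_one, hp]
  | prime_mul q n hq ih =>
    have ih := ih (right_ne_zero_of_mul hn₀) fun q' hq' hdvd => hn q' hq' (hdvd.mul_left q)
    obtain ⟨s, hs⟩ := exists_pow_prime_eq_dilate_add hq (dilate n p)
    rw [dilate_dilate] at hs
    refine map_mul_eq_zero_of_single Λ (fun h => ?_) r
    -- The value is divisible by `q` and smaller than `q`.
    refine Int.eq_zero_of_abs_lt_dvd (m := (q : ℤ)) ⟨-Λ (s * AddMonoidAlgebra.single h 1), ?_⟩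
      ((abs_map_dilate_mul_single_le Λ hB _ p h).trans_lt (hn q hq (dvd_mul_right q n)))
    have hpow : Λ (dilate n p ^ q * AddMonoidAlgebra.single h 1) = 0 := by
      rw [← Nat.succ_pred_eq_of_pos hq.pos, pow_succ', mul_assoc, ih]
    rw [hs, add_mul, map_add, smul_mul_assoc, map_zsmul, smul_eq_mul] at hpow
    linarith

end Dilation

section MeanErgodic

variable {𝕜 H F : Type*} [RCLike 𝕜] [NormedAddCommGroup H] [InnerProductSpace 𝕜 H]
  [CompleteSpace H] [NormedAddCommGroup F] [NormedSpace 𝕜 F]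

theorem sum_apply_starProjection_eqLocus_eq_zero {ι : Type*} {s : Finset ι} {A : ι → H →L[𝕜] F}
    {B : ι → H →L[𝕜] H} (hB : ∀ i ∈ s, ‖B i‖ ≤ 1) {y : H}
    (h : ∀ k : ℕ, ∑ i ∈ s, A i ((B i ^ k) y) = 0) :
    ∑ i ∈ s, A i (((B i).eqLocus (1 : H →L[𝕜] H)).starProjection y) = 0 := by
  have hlim : Filter.Tendsto
      (fun n : ℕ => ∑ i ∈ s, A i (birkhoffAverage 𝕜 (B i) id n y)) Filter.atTop
      (nhds (∑ i ∈ s, A i (((B i).eqLocus (1 : H →L[𝕜] H)).starProjection y))) :=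
    tendsto_finsetSum s fun i hi => ((A i).continuous.tendsto _).comp
      ((B i).tendsto_birkhoffAverage_orthogonalProjection (hB i hi) y)
  have havg (n : ℕ) : ∑ i ∈ s, A i (birkhoffAverage 𝕜 (B i) id n y) = 0 := by
    simp only [birkhoffAverage, birkhoffSum, id, map_smul, map_sum, ← Finset.smul_sum,
      ← pow_apply_eq_iterate]
    rw [Finset.sum_comm, Finset.sum_eq_zero fun k _ => h k, smul_zero]
  simp only [havg] at hlim
  exact tendsto_nhds_unique hlim tendsto_const_nhds

theorem exists_eq_sum_of_sum_smul_eq_zero {G : Type*} [AddCommMonoid G] [DecidableEq G]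
    {U : Multiplicative G →* (H →L[𝕜] H)} (hU : ∀ g, ‖U g‖ ≤ 1) {s : Finset G} (hs : 0 ∈ s)
    {c : G → 𝕜} (hc : c 0 ≠ 0) (N : ℕ) {y : H}
    (hy : ∀ k : ℕ, ∑ g ∈ s, c g • U (.ofAdd ((1 + k * N) • g)) y = 0) :
    ∃ z : G → H, (∀ g, U (.ofAdd (N • g)) (z g) = z g) ∧ y = ∑ g ∈ s.erase 0, z g := by
  set P : G → H → H := fun g =>
    ((U (.ofAdd (N • g))).eqLocus (1 : H →L[𝕜] H)).starProjection
  have hP_fixed (g : G) : U (.ofAdd (N • g)) (P g y) = P g y :=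
    LinearMap.mem_eqLocus.1 (Submodule.starProjection_apply_mem _ y)
  have hP_zero : P 0 y = y :=
    Submodule.starProjection_eq_self_iff.2 (by simp)
  have hsum : ∑ g ∈ s, c g • U (.ofAdd g) (P g y) = 0 := by
    refine sum_apply_starProjection_eqLocus_eq_zero (A := fun g => c g • U (.ofAdd g))
      (fun g _ => hU _) fun k => ?_
    rw [← hy k]
    refine Finset.sum_congr rfl fun g _ => ?_
    rw [add_smul, one_smul, mul_smul, ofAdd_add, ofAdd_nsmul k, map_mul, map_pow]
    rfl
  refine ⟨fun g => (-(c 0)⁻¹ * c g) • U (.ofAdd g) (P g y), fun g => ?_, ?_⟩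
  · have hcomm : U (.ofAdd (N • g)) (U (.ofAdd g) (P g y)) =
        U (.ofAdd g) (U (.ofAdd (N • g)) (P g y)) := by
      simp only [← mul_apply_eq_comp, ← map_mul, mul_comm]
    rw [map_smul, hcomm, hP_fixed]
  · rw [← Finset.add_sum_erase _ _ hs, ofAdd_zero, map_one, one_apply_eq_self,
      hP_zero] at hsum
    simp only [mul_smul]
    rw [← Finset.smul_sum, eq_neg_of_add_eq_zero_right hsum, neg_smul, smul_neg, neg_neg,
      inv_smul_smul₀ hc]

end MeanErgodic

section CondExp

theorem condExp_comp_measurePreserving {X Y : Type*} {mX : MeasurableSpace X}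
    {m mY : MeasurableSpace Y} {μ : Measure X} {ν : Measure Y} [IsFiniteMeasure μ]
    [IsFiniteMeasure ν] {E : Type*} [NormedAddCommGroup E] [NormedSpace ℝ E] [CompleteSpace E]
    {R : X → Y} (hR : MeasurePreserving R μ ν) (hm : m ≤ mY) {φ : Y → E} (hφ : Integrable φ ν) :
    ν[φ | m] ∘ R =ᵐ[μ] μ[φ ∘ R | m.comap R] := by
  have hcomap : m.comap R ≤ mX :=
    (MeasurableSpace.comap_mono hm).trans hR.measurable.comap_le
  have hset {ψ : Y → E} (hψ : Integrable ψ ν) {s : Set Y} (hs : MeasurableSet[m] s) :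
      ∫ x in R ⁻¹' s, (ψ ∘ R) x ∂μ = ∫ y in s, ψ y ∂ν := by
    rw [← hR.map_eq, setIntegral_map (hm s hs) (hR.map_eq.symm ▸ hψ.aestronglyMeasurable)
      hR.measurable.aemeasurable]
    rfl
  refine ae_eq_condExp_of_forall_setIntegral_eq hcomap (hR.integrable_comp_of_integrable hφ)
    (fun _ _ _ => (hR.integrable_comp_of_integrable integrable_condExp).integrableOn) ?_
    (stronglyMeasurable_condExp.comp_measurable (comap_measurable R)).aestronglyMeasurable
  rintro _ ⟨s, hs, rfl⟩ _
  rw [hset integrable_condExp hs, hset hφ hs, setIntegral_condExp hm hφ hs]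

theorem aestronglyMeasurable_invariants_of_comp_ae_eq {X : Type*} [MeasurableSpace X]
    {μ : Measure X} {S : X → X}
    (hS : Measure.QuasiMeasurePreserving S μ μ) {φ : X → ℝ} (hφ : AEStronglyMeasurable φ μ)
    (h : φ ∘ S =ᵐ[μ] φ) : AEStronglyMeasurable[MeasurableSpace.invariants S] φ μ := by
  -- Along almost every orbit `φ` is constant, so it agrees with the limsup of a measurable
  -- version of it along the orbit, which is invariant everywhere.
  set ψ : X → ℝ := hφ.mk φ
  have hψm : Measurable ψ := hφ.stronglyMeasurable_mk.measurable
  have hiter (n : ℕ) : ψ ∘ S^[n] =ᵐ[μ] φ := by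
    refine ((hS.iterate n).ae_eq_comp hφ.ae_eq_mk.symm).trans ?_
    induction n with
    | zero => rfl
    | succ n ih => exact (hS.ae_eq_comp ih).trans h
  set L : X → ℝ := fun x => Filter.limsup (fun n : ℕ => ψ (S^[n] x)) Filter.atTop with hL
  have hL_comp : L ∘ S = L := funext fun x => Filter.limsup_nat_add (fun n => ψ (S^[n] x)) 1
  have hL_meas : Measurable[MeasurableSpace.invariants S] L :=
    MeasurableSpace.measurable_invariants_dom.2
      ⟨Measurable.limsup fun n => hψm.comp (hS.measurable.iterate n), fun _ _ => by rw [hL_comp]⟩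
  refine ⟨L, hL_meas.stronglyMeasurable, ?_⟩
  filter_upwards [ae_all_iff.2 hiter] with x hx
  simp only [Function.comp_apply] at hx
  simp only [hL, hx, Filter.limsup_const]

end CondExp

/-- `T` is an action of `G` on `X` by maps preserving `μ`. -/
structure IsMeasurePreservingAction {G X : Type*} [AddMonoid G] [MeasurableSpace X]
    (μ : Measure X) (T : G → X → X) : Prop where
  measurePreserving : ∀ g, MeasurePreserving (T g) μ μ
  map_zero : T 0 = id
  map_add : ∀ g h, T (g + h) = T g ∘ T h

namespace IsMeasurePreservingAction

section Group

variable {G X : Type*} [AddGroup G] [MeasurableSpace X] {μ : Measure X} {T : G → X → X}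

theorem quasiMeasurePreserving (hT : IsMeasurePreservingAction μ T) (g : G) :
    Measure.QuasiMeasurePreserving (T g) μ μ :=
  (hT.measurePreserving g).quasiMeasurePreserving

theorem neg_comp (hT : IsMeasurePreservingAction μ T) (g : G) : T (-g) ∘ T g = id := by
  rw [← hT.map_add, neg_add_cancel, hT.map_zero]

/-- The group of those `g` under which `φ` is almost everywhere invariant. -/
def periods (hT : IsMeasurePreservingAction μ T) (φ : X → ℝ) : AddSubgroup G where
  carrier := {g | φ ∘ T (-g) =ᵐ[μ] φ}
  zero_mem' := by simp [hT.map_zero]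
  add_mem' {a b} ha hb := by
    have hab : T (-(a + b)) = T (-b) ∘ T (-a) := by rw [neg_add_rev, hT.map_add]
    rw [Set.mem_ofPred_eq, hab, ← Function.comp_assoc]
    exact ((hT.quasiMeasurePreserving (-a)).ae_eq_comp hb).trans ha
  neg_mem' {a} ha := by
    have := (hT.quasiMeasurePreserving a).ae_eq_comp ha
    rw [Function.comp_assoc, hT.neg_comp, Function.comp_id] at this
    rw [Set.mem_ofPred_eq, neg_neg]
    exact this.symm

variable {φ : X → ℝ}

theorem mem_periods (hT : IsMeasurePreservingAction μ T) {g : G} :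
    g ∈ hT.periods φ ↔ φ ∘ T (-g) =ᵐ[μ] φ :=
  Iff.rfl

theorem mem_periods_iff_comp (hT : IsMeasurePreservingAction μ T) {g : G} :
    g ∈ hT.periods φ ↔ φ ∘ T g =ᵐ[μ] φ := by
  rw [← neg_mem_iff, mem_periods, neg_neg]

/-- The representation of `G` on `L²(μ)` given by `(U g y)(x) = y(g⁻¹ x)`. -/
noncomputable def koopman (hT : IsMeasurePreservingAction μ T) :
    Multiplicative G →* (Lp ℝ 2 μ →L[ℝ] Lp ℝ 2 μ) where
  toFun g := (Lp.compMeasurePreservingₗᵢ ℝ (T (-g.toAdd))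
    (hT.measurePreserving _)).toContinuousLinearMap
  map_one' := by
    ext1 y
    refine Lp.ext ((Lp.coeFn_compMeasurePreserving y _).trans ?_)
    simp [hT.map_zero]
  map_mul' g h := by
    ext1 y
    refine Lp.ext ((Lp.coeFn_compMeasurePreserving y _).trans ?_)
    rw [toAdd_mul, neg_add_rev, hT.map_add, ← Function.comp_assoc]
    exact ((hT.quasiMeasurePreserving _).ae_eq_comp
      (Lp.coeFn_compMeasurePreserving y (hT.measurePreserving _)).symm).trans
      (Lp.coeFn_compMeasurePreserving _ (hT.measurePreserving _)).symm

theorem coeFn_koopman (hT : IsMeasurePreservingAction μ T) (g : G) (y : Lp ℝ 2 μ) :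
    hT.koopman (.ofAdd g) y =ᵐ[μ] y ∘ T (-g) :=
  Lp.coeFn_compMeasurePreserving y (hT.measurePreserving (-g))

theorem norm_koopman_le (hT : IsMeasurePreservingAction μ T) (g : Multiplicative G) :
    ‖hT.koopman g‖ ≤ 1 :=
  LinearIsometry.norm_toContinuousLinearMap_le _

theorem mem_periods_of_koopman_eq_self (hT : IsMeasurePreservingAction μ T) {g : G} {y : Lp ℝ 2 μ}
    (h : hT.koopman (.ofAdd g) y = y) : g ∈ hT.periods y := by
  have := hT.coeFn_koopman g y
  rw [h] at this
  exact this.symm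

theorem coeFn_sum_smul_koopman_toLp (hT : IsMeasurePreservingAction μ T) (hφ : MemLp φ 2 μ)
    {ι : Type*} (s : Finset ι) (c : ι → ℝ) (v : ι → G) :
    ((∑ i ∈ s, c i • hT.koopman (.ofAdd (v i)) (hφ.toLp φ) : Lp ℝ 2 μ) : X → ℝ) =ᵐ[μ]
      fun x => ∑ i ∈ s, c i * φ (T (-v i) x) := by
  have hterm : ∀ᵐ x ∂μ, ∀ i ∈ s,
      (c i • hT.koopman (.ofAdd (v i)) (hφ.toLp φ) : Lp ℝ 2 μ) x = c i * φ (T (-v i) x) := by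
    refine (Finset.eventually_all s).2 fun i _ => ?_
    filter_upwards [Lp.coeFn_smul (c i) (hT.koopman (.ofAdd (v i)) (hφ.toLp φ)),
      hT.coeFn_koopman (v i) (hφ.toLp φ),
      (hT.quasiMeasurePreserving (-v i)).ae_eq_comp hφ.coeFn_toLp] with x hsmul hkoop hcomp
    rw [hsmul, Pi.smul_apply, hkoop, hcomp, smul_eq_mul, Function.comp_apply]
  refine (Lp.coeFn_finsetSum _ _).trans ?_
  filter_upwards [hterm] with x hx
  rw [Finset.sum_apply, Finset.sum_congr rfl hx]

end Group

theorem comap_invariants {G X : Type*} [AddCommGroup G] [MeasurableSpace X] {μ : Measure X}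
    {T : G → X → X} (hT : IsMeasurePreservingAction μ T) (g h : G) :
    (MeasurableSpace.invariants (T g)).comap (T h) = MeasurableSpace.invariants (T g) := by
  have hcomm (a : G) : Function.Semiconj (T a) (T g) (T g) := fun x => by
    rw [← Function.comp_apply (f := T a), ← Function.comp_apply (f := T g), ← hT.map_add,
      ← hT.map_add, add_comm]
  have hmeas (a : G) := MeasurableSpace.measurable_invariants_of_semiconj
    (hT.measurePreserving a).measurable (hcomm a)
  refine le_antisymm (hmeas h).comap_le fun s hs => ⟨T (-h) ⁻¹' s, hmeas (-h) hs, ?_⟩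
  rw [← Set.preimage_comp, hT.neg_comp, Set.preimage_id]

end IsMeasurePreservingAction

theorem finiteIndex_of_linearIndependent {M : Type*} [AddCommGroup M] [Module.Free ℤ M]
    [Module.Finite ℤ M] {Λ : AddSubgroup M} {ι : Type*} [Fintype ι] {b : ι → M}
    (hcard : Fintype.card ι = Module.finrank ℤ M) (hb : LinearIndependent ℤ b)
    (hmem : ∀ i, b i ∈ Λ) : Λ.FiniteIndex := by
  have hrank : Module.finrank ℤ Λ.toIntSubmodule = Module.finrank ℤ M := by
    refine le_antisymm (Submodule.finrank_le _) (hcard ▸ ?_)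
    exact LinearIndependent.fintype_card_le_finrank
      (LinearIndependent.of_comp (v := fun i => ⟨b i, hmem i⟩) Λ.toIntSubmodule.subtype hb)
  have : Finite (M ⧸ Λ) := Submodule.finiteQuotientOfFreeOfRankEq _ hrank
  exact Λ.finiteIndex_of_finite_quotient

namespace Proportional

theorem refl (g : ℤ × ℤ) : Proportional g g :=
  ⟨1, 1, one_ne_zero, one_ne_zero, rfl⟩

theorem symm {g h : ℤ × ℤ} : Proportional g h → Proportional h g
  | ⟨a, b, ha, hb, hab⟩ => ⟨b, a, hb, ha, hab.symm⟩

theorem trans {g h k : ℤ × ℤ} : Proportional g h → Proportional h k → Proportional g k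
  | ⟨a, b, ha, hb, hab⟩, ⟨c, d, hc, hd, hcd⟩ =>
    ⟨c * a, b * d, mul_ne_zero hc ha, mul_ne_zero hb hd, by
      rw [mul_smul, hab, smul_comm, hcd, mul_smul]⟩

theorem smul_left {g : ℤ × ℤ} {a : ℤ} (ha : a ≠ 0) : Proportional (a • g) g :=
  ⟨1, a, one_ne_zero, ha, one_smul ℤ _⟩

theorem exists_representatives : ∃ r : ℤ × ℤ → ℤ × ℤ,
    (∀ g, Proportional (r g) g) ∧ ∀ g h, Proportional g h → r g = r h :=
  let classes : Setoid (ℤ × ℤ) := ⟨Proportional, refl, symm, trans⟩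
  ⟨fun g => (Quotient.mk classes g).out, fun g => Quotient.mk_out (s := classes) g,
    fun _ _ h => congrArg Quotient.out (Quotient.sound h)⟩

theorem exists_common_multiples {ι : Type*} {s : Finset ι} {v : ι → ℤ × ℤ}
    (hv : ∀ i ∈ s, v i ≠ 0) : ∃ w : ι → ℤ × ℤ,
      (∀ i ∈ s, w i ≠ 0) ∧ (∀ i ∈ s, w i ∈ AddSubgroup.zmultiples (v i)) ∧
      ∀ i j, w i ≠ w j → ¬ Proportional (w i) (w j) := by
  obtain ⟨r, hr, hr_congr⟩ := exists_representatives
  choose a b ha hb hab using fun i => hr (v i)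
  set M : ℤ := ∏ i ∈ s, a i
  have hM : M ≠ 0 := Finset.prod_ne_zero_iff.2 fun i _ => ha i
  have hwv (i : ι) : Proportional (M • r (v i)) (v i) := (smul_left hM).trans (hr (v i))
  refine ⟨fun i => M • r (v i), fun i hi => ?_, fun i hi => ?_, fun i j hne hprop => hne ?_⟩
  · refine smul_ne_zero hM fun hr₀ => smul_ne_zero (hb i) (hv i hi) ?_
    rw [← hab, hr₀, smul_zero]
  · obtain ⟨m, hm⟩ : a i ∣ M := Finset.dvd_prod_of_mem a hi
    refine AddSubgroup.mem_zmultiples_iff.2 ⟨m * b i, ?_⟩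
    rw [mul_smul, ← hab, smul_smul, mul_comm m, ← hm]
  · exact congrArg (M • ·) (hr_congr _ _ (((hwv i).symm.trans hprop).trans (hwv j)))

end Proportional

theorem linearIndependent_of_not_proportional {g h : ℤ × ℤ} (hg : g ≠ 0) (hh : h ≠ 0)
    (hgh : ¬ Proportional g h) : LinearIndependent ℤ ![g, h] := by
  refine LinearIndependent.pair_iff.2 fun a b hab => ?_
  by_cases ha : a = 0
  · rw [ha, zero_smul, zero_add] at hab
    exact ⟨ha, (smul_eq_zero.1 hab).resolve_right hh⟩
  by_cases hb : b = 0
  · rw [hb, zero_smul, add_zero] at hab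
    exact ⟨(smul_eq_zero.1 hab).resolve_right hg, hb⟩
  exact absurd ⟨a, -b, ha, neg_ne_zero.2 hb, by rw [neg_smul, eq_neg_of_add_eq_zero_left hab]⟩ hgh

section Lattice

variable {X : Type*} [MeasurableSpace X] {μ : Measure X} {T : ℤ × ℤ → X → X} {f : X → ℝ}

/-- The periodic functions, as a subgroup of all functions on `X`. -/
def periodicFunctions (μ : Measure X) (T : ℤ × ℤ → X → X) : AddSubgroup (X → ℝ) where
  carrier := {φ | PeriodicFun μ T φ}
  zero_mem' := ⟨⊤, inferInstance, fun _ _ => .rfl⟩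
  add_mem' := fun ⟨A, _, hA⟩ ⟨B, _, hB⟩ =>
    ⟨A ⊓ B, inferInstance, fun g hg => (hA g hg.1).add (hB g hg.2)⟩
  neg_mem' := fun ⟨A, hA, hA'⟩ => ⟨A, hA, fun g hg => (hA' g hg).neg⟩

namespace IsMeasurePreservingAction

variable (hT : IsMeasurePreservingAction μ T)

include hT

theorem periodicFun_congr {ψ : X → ℝ} (hf : PeriodicFun μ T f) (h : f =ᵐ[μ] ψ) :
    PeriodicFun μ T ψ := by
  obtain ⟨Λ, hΛ, hΛf⟩ := hf
  exact ⟨Λ, hΛ, fun g hg =>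
    (((hT.quasiMeasurePreserving (-g)).ae_eq_comp h).symm.trans (hΛf g hg)).trans h⟩

theorem mem_periods_invProj (f : X → ℝ) (g : ℤ × ℤ) : g ∈ hT.periods (invProj μ T f g) :=
  hT.mem_periods_iff_comp.2 <| .of_eq <|
    MeasurableSpace.comp_eq_of_measurable_invariants stronglyMeasurable_condExp.measurable

section Finite

variable [IsFiniteMeasure μ]

theorem invProj_ae_eq_self (hf : Integrable f μ) {g : ℤ × ℤ} (hg : g ∈ hT.periods f) :
    invProj μ T f g =ᵐ[μ] f :=
  condExp_of_aestronglyMeasurable' (MeasurableSpace.invariants_le _)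
    (aestronglyMeasurable_invariants_of_comp_ae_eq (hT.quasiMeasurePreserving g)
      hf.aestronglyMeasurable (hT.mem_periods_iff_comp.1 hg)) hf

theorem periods_le_periods_invProj (hf : Integrable f μ) (g : ℤ × ℤ) :
    hT.periods f ≤ hT.periods (invProj μ T f g) := fun h hh => by
  have hcomp := condExp_comp_measurePreserving (hT.measurePreserving (-h))
    (MeasurableSpace.invariants_le (T g)) hf
  rw [hT.comap_invariants] at hcomp
  exact hcomp.trans (condExp_congr_ae (hT.mem_periods.1 hh))

theorem periodicFun_invProj (hf : Integrable f μ) {g h : ℤ × ℤ} (hh : h ∈ hT.periods f)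
    (hg₀ : g ≠ 0) (hh₀ : h ≠ 0) (hgh : ¬ Proportional g h) : PeriodicFun μ T (invProj μ T f g) := by
  refine ⟨hT.periods (invProj μ T f g), ?_, fun _ hk => hT.mem_periods.1 hk⟩
  refine finiteIndex_of_linearIndependent (by simp)
    (linearIndependent_of_not_proportional hg₀ hh₀ hgh) fun i => ?_
  fin_cases i
  exacts [hT.mem_periods_invProj f g, hT.periods_le_periods_invProj hf g hh]

theorem periodicFun_invProj_nsmul_sub_sum {ι : Type*} {s : Finset ι} {φ : ι → X → ℝ}
    {w : ι → ℤ × ℤ} (hf : f =ᵐ[μ] ∑ i ∈ s, φ i) (hφ : ∀ i ∈ s, Integrable (φ i) μ)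
    (hw : ∀ i ∈ s, w i ∈ hT.periods (φ i)) (hw₀ : ∀ i ∈ s, w i ≠ 0) {g : ℤ × ℤ} (hg : g ≠ 0)
    (hgw : ∀ i ∈ s, g ≠ w i → ¬ Proportional g (w i)) {l : ℕ} (hl : l ≠ 0) :
    PeriodicFun μ T (invProj μ T f (l • g) - ∑ i ∈ s with w i = g, φ i) := by
  have hterm : ∀ i ∈ s, invProj μ T (φ i) (l • g) - (if w i = g then φ i else 0) ∈
      periodicFunctions μ T := fun i hi => by
    split_ifs with hgi
    · have hlg : l • g ∈ hT.periods (φ i) := nsmul_mem (hgi ▸ hw i hi) l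
      refine hT.periodicFun_congr (zero_mem (periodicFunctions μ T)) ?_
      filter_upwards [hT.invProj_ae_eq_self (hφ i hi) hlg] with x hx
      rw [Pi.sub_apply, hx, sub_self, Pi.zero_apply]
    · rw [sub_zero]
      have hprop : Proportional g (l • g) := by
        simpa using (Proportional.smul_left (Nat.cast_ne_zero.2 hl)).symm
      exact hT.periodicFun_invProj (hφ i hi) (hw i hi) (smul_ne_zero hl hg) (hw₀ i hi)
        fun h => hgw i hi (Ne.symm hgi) (hprop.trans h)
  have hsum : invProj μ T f (l • g) =ᵐ[μ] ∑ i ∈ s, invProj μ T (φ i) (l • g) :=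
    (condExp_congr_ae hf).trans (condExp_finsetSum hφ _)
  refine hT.periodicFun_congr (sum_mem hterm) ?_
  filter_upwards [hsum] with x hx
  rw [Finset.sum_sub_distrib, Finset.sum_filter, Pi.sub_apply, Pi.sub_apply, hx]

end Finite

end IsMeasurePreservingAction

end Lattice

section PolyAct

variable {X : Type*} {T : ℤ × ℤ → X → X} {f : X → ℝ}

theorem polyAct_zero : polyAct T 0 f = 0 :=
  rfl

theorem polyAct_single (g : ℤ × ℤ) (c : ℤ) (x : X) :
    polyAct T (AddMonoidAlgebra.single g c) f x = c * f (T (-g) x) :=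
  Finsupp.sum_single_index (by rw [Int.cast_zero, zero_mul])

theorem polyAct_add (p q : AddMonoidAlgebra ℤ (ℤ × ℤ)) :
    polyAct T (p + q) f = polyAct T p f + polyAct T q f :=
  funext fun _ => Finsupp.sum_add_index' (fun _ => by rw [Int.cast_zero, zero_mul])
    fun _ _ _ => by rw [Int.cast_add, add_mul]

theorem polyAct_dilate (n : ℕ) (p : AddMonoidAlgebra ℤ (ℤ × ℤ)) (x : X) :
    polyAct T (dilate n p) f x = ∑ g ∈ p.coeff.support, (p.coeff g : ℝ) * f (T (-(n • g)) x) := by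
  suffices polyAct T (dilate n p) f x = p.coeff.sum fun g c => (c : ℝ) * f (T (-(n • g)) x) from
    this
  induction p using AddMonoidAlgebra.induction_linear with
  | zero => rw [map_zero, polyAct_zero]; rfl
  | add p q hp hq =>
    rw [map_add, polyAct_add, Pi.add_apply, hp, hq, AddMonoidAlgebra.coeff_add,
      Finsupp.sum_add_index' (fun _ => by rw [Int.cast_zero, zero_mul])
        fun _ _ _ => by rw [Int.cast_add, add_mul]]
  | single g c =>
    rw [dilate_single, polyAct_single, AddMonoidAlgebra.coeff_single,
      Finsupp.sum_single_index (by rw [Int.cast_zero, zero_mul])]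

theorem exists_intCast_map_eq_polyAct {x : X} (hx : ∀ g, ∃ k : ℤ, f (T (-g) x) = k) :
    ∃ Λ : AddMonoidAlgebra ℤ (ℤ × ℤ) →+ ℤ, ∀ r, (Λ r : ℝ) = polyAct T r f x := by
  choose F hF using hx
  refine ⟨⟨⟨fun r => r.coeff.sum fun g c => c * F g, rfl⟩, fun p q => ?_⟩, fun r => ?_⟩
  · exact Finsupp.sum_add_index' (h := fun g c => c * F g) (fun _ => zero_mul _)
      fun _ _ _ => add_mul _ _ _
  · simp [polyAct, Finsupp.sum, hF]

namespace IsMeasurePreservingAction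

variable [MeasurableSpace X] {μ : Measure X}

theorem polyAct_mul_single (hT : IsMeasurePreservingAction μ T) (p : AddMonoidAlgebra ℤ (ℤ × ℤ))
    (h : ℤ × ℤ) :
    polyAct T (p * AddMonoidAlgebra.single h 1) f = polyAct T p f ∘ T (-h) := by
  induction p using AddMonoidAlgebra.induction_linear with
  | zero => rw [zero_mul]; rfl
  | add p q hp hq => rw [add_mul, polyAct_add, hp, hq, polyAct_add]; rfl
  | single g c =>
    funext x
    rw [AddMonoidAlgebra.single_mul_single, mul_one, Function.comp_apply, polyAct_single,
      polyAct_single, neg_add, hT.map_add, Function.comp_apply]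

theorem exists_coeff_zero_ne_zero_of_polyAct (hT : IsMeasurePreservingAction μ T)
    {p : AddMonoidAlgebra ℤ (ℤ × ℤ)} (hp : p ≠ 0) (hpf : polyAct T p f =ᵐ[μ] 0) :
    ∃ p' : AddMonoidAlgebra ℤ (ℤ × ℤ), p'.coeff 0 ≠ 0 ∧ polyAct T p' f =ᵐ[μ] 0 := by
  obtain ⟨g, hg⟩ : ∃ g, p.coeff g ≠ 0 := by
    by_contra! hzero
    exact hp (AddMonoidAlgebra.ext (Finsupp.ext hzero))
  refine ⟨p * AddMonoidAlgebra.single (-g) 1, ?_, ?_⟩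
  · rwa [AddMonoidAlgebra.coeff_mul_single_apply, mul_one, neg_neg, zero_add]
  · rw [hT.polyAct_mul_single]
    exact (hT.quasiMeasurePreserving _).ae_eq_comp hpf

theorem polyAct_dilate_ae_eq_zero (hT : IsMeasurePreservingAction μ T)
    (hf : ∀ᵐ x ∂μ, ∃ k : ℤ, f x = k) {B : ℤ} (hB : ∀ᵐ x ∂μ, |f x| ≤ B)
    {p : AddMonoidAlgebra ℤ (ℤ × ℤ)} (hpf : polyAct T p f =ᵐ[μ] 0) {n : ℕ} (hn₀ : n ≠ 0)
    (hn : ∀ q : ℕ, q.Prime → q ∣ n → (p.coeff.sum fun _ c => |c|) * B < q) :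
    polyAct T (dilate n p) f =ᵐ[μ] 0 := by
  have horbit : ∀ᵐ x ∂μ, ∀ g, (∃ k : ℤ, f (T (-g) x) = k) ∧ |f (T (-g) x)| ≤ B ∧
      polyAct T p f (T (-g) x) = 0 :=
    ae_all_iff.2 fun g => (hT.quasiMeasurePreserving (-g)).ae (hf.and (hB.and hpf))
  filter_upwards [horbit] with x hx
  obtain ⟨Λ, hΛ⟩ := exists_intCast_map_eq_polyAct fun g => (hx g).1
  have hΛB (g : ℤ × ℤ) : |Λ (AddMonoidAlgebra.single g 1)| ≤ B := by
    have := (hx g).2.1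
    rw [← one_mul (f _), ← Int.cast_one, ← polyAct_single, ← hΛ] at this
    exact_mod_cast this
  have hΛp (r : AddMonoidAlgebra ℤ (ℤ × ℤ)) : Λ (p * r) = 0 := by
    refine map_mul_eq_zero_of_single Λ (fun g => ?_) r
    rw [← Int.cast_eq_zero (α := ℝ), hΛ, hT.polyAct_mul_single]
    exact (hx g).2.2
  have := map_dilate_mul_eq_zero Λ hΛB hΛp hn₀ hn 1
  rw [mul_one] at this
  rw [← hΛ, this, Int.cast_zero, Pi.zero_apply]

theorem exists_forall_polyAct_dilate_ae_eq_zero (hT : IsMeasurePreservingAction μ T)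
    (hf : ∀ᵐ x ∂μ, ∃ k : ℤ, f x = k) {B : ℤ} (hB : ∀ᵐ x ∂μ, |f x| ≤ B)
    {p : AddMonoidAlgebra ℤ (ℤ × ℤ)} (hpf : polyAct T p f =ᵐ[μ] 0) :
    ∃ N ≠ 0, ∀ k, polyAct T (dilate (1 + k * N) p) f =ᵐ[μ] 0 := by
  set Q : ℕ := ((p.coeff.sum fun _ c => |c|) * B).toNat
  refine ⟨Q.factorial, Q.factorial_ne_zero, fun k => ?_⟩
  refine hT.polyAct_dilate_ae_eq_zero hf hB hpf (by lia) fun q hq hdvd => ?_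
  refine (Int.self_le_toNat _).trans_lt (Nat.cast_lt.2 (lt_of_not_ge fun hqQ => hq.not_dvd_one ?_))
  exact (Nat.dvd_add_left ((Nat.dvd_factorial hq.pos hqQ).mul_left k)).1 hdvd

theorem exists_ae_eq_sum_of_polyAct_dilate (hT : IsMeasurePreservingAction μ T)
    (hf : MemLp f 2 μ) {p : AddMonoidAlgebra ℤ (ℤ × ℤ)} (hp : p.coeff 0 ≠ 0) {N : ℕ}
    (hpf : ∀ k, polyAct T (dilate (1 + k * N) p) f =ᵐ[μ] 0) :
    ∃ φ : ℤ × ℤ → X → ℝ, (∀ g, MemLp (φ g) 2 μ) ∧ (∀ g, N • g ∈ hT.periods (φ g)) ∧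
      f =ᵐ[μ] ∑ g ∈ p.coeff.support.erase 0, φ g := by
  obtain ⟨z, hz, hsum⟩ := exists_eq_sum_of_sum_smul_eq_zero (U := hT.koopman) (y := hf.toLp f)
    hT.norm_koopman_le (Finsupp.mem_support_iff.2 hp) (c := fun g => (p.coeff g : ℝ))
    (Int.cast_ne_zero.2 hp) N fun k => Lp.ext <| by
      refine (hT.coeFn_sum_smul_koopman_toLp hf _ _ _).trans (.trans ?_ (Lp.coeFn_zero ℝ 2 μ).symm)
      filter_upwards [hpf k] with x hx
      rw [← polyAct_dilate, hx]
  refine ⟨fun g => z g, fun g => Lp.memLp (z g),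
    fun g => hT.mem_periods_of_koopman_eq_self (hz g), ?_⟩
  refine hf.coeFn_toLp.symm.trans ?_
  rw [hsum]
  exact Lp.coeFn_finsetSum _ _

theorem exists_ae_eq_sum_of_polyAct [IsFiniteMeasure μ] (hT : IsMeasurePreservingAction μ T)
    (hf : ∀ᵐ x ∂μ, ∃ k : ℤ, f x = k) (hf_top : MemLp f ⊤ μ) {p : AddMonoidAlgebra ℤ (ℤ × ℤ)}
    (hp : p ≠ 0) (hpf : polyAct T p f =ᵐ[μ] 0) :
    ∃ (s : Finset (ℤ × ℤ)) (v : ℤ × ℤ → ℤ × ℤ) (φ : ℤ × ℤ → X → ℝ), (∀ g ∈ s, v g ≠ 0) ∧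
      (∀ g, Integrable (φ g) μ) ∧ (∀ g, v g ∈ hT.periods (φ g)) ∧ f =ᵐ[μ] ∑ g ∈ s, φ g := by
  obtain ⟨p', hp', hp'f⟩ := hT.exists_coeff_zero_ne_zero_of_polyAct hp hpf
  obtain ⟨B, hB⟩ := exists_int_ge (lpNorm f ⊤ μ)
  have hfB : ∀ᵐ x ∂μ, |f x| ≤ B :=
    (ae_le_lpNorm_exponent_top hf_top).mono fun _ hx => hx.trans hB
  obtain ⟨N, hN, hdilate⟩ := hT.exists_forall_polyAct_dilate_ae_eq_zero hf hfB hp'f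
  obtain ⟨φ, hφ, hφN, hsum⟩ :=
    hT.exists_ae_eq_sum_of_polyAct_dilate (hf_top.mono_exponent le_top) hp' hdilate
  exact ⟨_, fun g => N • g, φ, fun g hg => smul_ne_zero hN (Finset.ne_of_mem_erase hg),
    fun g => (hφ g).integrable one_le_two, hφN, hsum⟩

end IsMeasurePreservingAction

end PolyAct

/-- **Theorem 3.3 (spectral decomposition).** Let `(X, μ)` be a probability space with
a measure-preserving `ℤ²`-action and let `f ∈ L^∞(X)` be integer-valued with
`Ann(f) ≠ {0}`. Then there is a finite set `Δ ⊆ ℤ² ∖ {0}` such that: no two elements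
of `Δ` are proportional; `f₀ = f − Σ_{g∈Δ} f^g` is periodic; and `f^{l·g} − f^g` is
periodic for every `l ≥ 1` and `g ∈ Δ`. -/
theorem spectral_decomposition
    {X : Type*} [MeasurableSpace X] (μ : Measure X) [IsProbabilityMeasure μ]
    (T : ℤ × ℤ → X → X)
    (hmp : ∀ g, MeasurePreserving (T g) μ μ)
    (hT0 : T 0 = id)
    (hTadd : ∀ g h : ℤ × ℤ, T (g + h) = T g ∘ T h)
    (f : X → ℝ) (hfmeas : Measurable f)
    (hfbdd : MemLp f ⊤ μ)
    (hfint : ∀ᵐ x ∂μ, ∃ k : ℤ, f x = (k : ℝ))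
    (hann : ∃ p : AddMonoidAlgebra ℤ (ℤ × ℤ), p ≠ 0 ∧
      polyAct T p f =ᵐ[μ] (fun _ => (0 : ℝ))) :
    ∃ Δ : Finset (ℤ × ℤ),
      (∀ g ∈ Δ, g ≠ (0 : ℤ × ℤ)) ∧
      (∀ g ∈ Δ, ∀ h ∈ Δ, g ≠ h → ¬ Proportional g h) ∧
      PeriodicFun μ T (f - ∑ g ∈ Δ, invProj μ T f g) ∧
      ∀ l : ℕ, 1 ≤ l → ∀ g ∈ Δ,
        PeriodicFun μ T (invProj μ T f (l • g) - invProj μ T f g) := by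
  have hT : IsMeasurePreservingAction μ T := ⟨hmp, hT0, hTadd⟩
  obtain ⟨p, hp, hpf⟩ := hann
  obtain ⟨s, v, φ, hv, hφ, hvφ, hsum⟩ := hT.exists_ae_eq_sum_of_polyAct hfint hfbdd hp hpf
  obtain ⟨w, hw₀, hwv, hw⟩ := Proportional.exists_common_multiples hv
  have hwφ : ∀ i ∈ s, w i ∈ hT.periods (φ i) := fun i hi =>
    AddSubgroup.zmultiples_le_of_mem (hvφ i) (hwv i hi)
  have hperiodic {l : ℕ} (hl : l ≠ 0) : ∀ g ∈ s.image w,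
      invProj μ T f (l • g) - ∑ i ∈ s with w i = g, φ i ∈ periodicFunctions μ T :=
    Finset.forall_mem_image.2 fun j hj => hT.periodicFun_invProj_nsmul_sub_sum hsum
      (fun i _ => hφ i) hwφ hw₀ (hw₀ j hj) (fun i _ => hw j i) hl
  have hperiodic_one : ∀ g ∈ s.image w,
      invProj μ T f g - ∑ i ∈ s with w i = g, φ i ∈ periodicFunctions μ T := by
    simpa only [one_smul] using hperiodic one_ne_zero
  refine ⟨s.image w, Finset.forall_mem_image.2 hw₀, ?_, ?_, fun l hl g hg => ?_⟩
  · exact Finset.forall_mem_image.2 fun i _ => Finset.forall_mem_image.2 fun j _ => hw i j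
  · refine hT.periodicFun_congr (neg_mem (sum_mem hperiodic_one)) ?_
    filter_upwards [hsum] with x hx
    rw [Finset.sum_sub_distrib, neg_sub,
      Finset.sum_fiberwise_of_maps_to fun _ => Finset.mem_image_of_mem w, Pi.sub_apply, ← hx,
      Pi.sub_apply]
  · have := sub_mem (hperiodic (Nat.one_le_iff_ne_zero.1 hl) g hg) (hperiodic_one g hg)
    rwa [sub_sub_sub_cancel_right] at this
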